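/- arXiv:1711.03194 — 2 statements merged into one kernel-verified Lean document; each statement's English description precedes it below -/
import Mathlib

section
/- Let η > 0, let N ≥ 1, let w = (w_1,…,w_N) be a probability vector with w_i > 0 for all i, and let l = (l_1,…,l_N) ∈ ℝ^N be a vector of losses. Define the exponentially updated weights w^μ_i = w_i e^{-η l_i} / (Σ_{j=1}^N w_j e^{-η l_j}) and the mix loss m = -(1/η) ln Σ_{i=1}^N w_i e^{-η l_i}. Then for every probability vector q = (q_1,…,q_N): m = Σ_{i=1}^N q_i l_i + (1/η)(D(q‖w) - D(q‖w^μ)). -/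
/-- Mix loss identity (Lemma 1 / Bousquet–Warmuth style).
For a probability vector `w` with positive entries, losses `l`, exponentially
updated weights `wμ` and mix loss `m`, one has for every probability vector `q`:
`m = ∑ q i * l i + (1/η) (D(q‖w) - D(q‖wμ))`, where
`D(q‖p) = ∑ q i * log (q i / p i)` (with the convention `0 log 0 = 0`). -/
theorem statement_0
    (η : ℝ) (hη : 0 < η) (N : ℕ) (hN : 1 ≤ N)
    (w l q : Fin N → ℝ)
    (hwpos : ∀ i, 0 < w i) (hwsum : ∑ i, w i = 1)
    (hqnonneg : ∀ i, 0 ≤ q i) (hqsum : ∑ i, q i = 1)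
    (wμ : Fin N → ℝ)
    (hwμ : ∀ i, wμ i =
      w i * Real.exp (-η * l i) / ∑ j, w j * Real.exp (-η * l j))
    (m : ℝ)
    (hm : m = -(1 / η) * Real.log (∑ i, w i * Real.exp (-η * l i))) :
    m = (∑ i, q i * l i) +
      (1 / η) * ((∑ i, q i * Real.log (q i / w i)) -
        (∑ i, q i * Real.log (q i / wμ i))) := by
  have hZ : 0 < ∑ j, w j * Real.exp (-η * l j) := by
    haveI : Nonempty (Fin N) := ⟨⟨0, hN⟩⟩
    exact Finset.sum_pos (fun i _ => mul_pos (hwpos i) (Real.exp_pos _))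
      Finset.univ_nonempty
  generalize hZdef : ∑ j, w j * Real.exp (-η * l j) = Z at *
  have key : ∀ i, q i * Real.log (q i / w i) - q i * Real.log (q i / wμ i)
      = -η * (q i * l i) - q i * Real.log Z := by
    intro i
    rcases (hqnonneg i).eq_or_lt with h | h
    · simp [← h]
    · have hw := hwpos i
      have he := Real.exp_pos (-η * l i)
      have hwe := mul_pos hw he
      rw [hwμ i, Real.log_div h.ne' hw.ne', Real.log_div h.ne' (div_pos hwe hZ).ne',
        Real.log_div hwe.ne' hZ.ne', Real.log_mul hw.ne' he.ne', Real.log_exp]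
      ring
  rw [← Finset.sum_sub_distrib, Finset.sum_congr rfl (fun i _ => key i),
    Finset.sum_sub_distrib, ← Finset.mul_sum, ← Finset.sum_mul, hqsum, hm]
  field_simp
  ring
end

section
/- Let B > 0 and 0 < η ≤ 1/(2B²). Let p = (p_1,…,p_N) be a probability vector and let c_1,…,c_N ∈ [-B, B] be forecasts. Define the aggregated forecast γ = (1/(4ηB)) ln [ (Σ_{i=1}^N p_i e^{-η (B - c_i)²}) / (Σ_{i=1}^N p_i e^{-η (B + c_i)²}) ]. Then for every outcome y ∈ [-B, B]: (y - γ)² ≤ -(1/η) ln Σ_{i=1}^N p_i e^{-η (y - c_i)²}. -/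
open MeasureTheory ProbabilityTheory in
/-- Two-point Hoeffding bound. -/
lemma two_point_hoeffding (B g s : ℝ) (hB : 0 < B) (h1 : -B ≤ g) (h2 : g ≤ B) :
    (B + g) * Real.exp (s * (B - g)) + (B - g) * Real.exp (-s * (B + g))
      ≤ 2 * B * Real.exp (s ^ 2 * B ^ 2 / 2) := by
  set a : ℝ := (B + g) / (2 * B) with ha
  set b : ℝ := (B - g) / (2 * B) with hb
  have ha0 : 0 ≤ a := div_nonneg (by linarith) (by linarith)
  have hb0 : 0 ≤ b := div_nonneg (by linarith) (by linarith)
  have hab : a + b = 1 := by rw [ha, hb]; field_simp; ring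
  let μ : Measure ℝ := ENNReal.ofReal a • Measure.dirac B + ENNReal.ofReal b • Measure.dirac (-B)
  have hμ : IsProbabilityMeasure μ := by
    constructor
    simp [μ, ← ENNReal.ofReal_add ha0 hb0, hab]
  have hint : ∀ f : ℝ → ℝ, ∫ x, f x ∂μ = a * f B + b * f (-B) := by
    intro f
    rw [integral_add_measure, integral_smul_measure, integral_smul_measure]
    · simp [ha0, hb0]
    · exact (integrable_dirac (by simp)).smul_measure (by simp)
    · exact (integrable_dirac (by simp)).smul_measure (by simp)
  have hae : ∀ᵐ x ∂μ, id x ∈ Set.Icc (-B) B := by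
    rw [ae_add_measure_iff]
    constructor
    · apply Measure.ae_smul_measure
      rw [ae_dirac_iff (by exact measurableSet_Icc)]
      exact ⟨by simp; linarith, by simp⟩
    · apply Measure.ae_smul_measure
      rw [ae_dirac_iff (by exact measurableSet_Icc)]
      exact ⟨by simp, by simp; linarith⟩
  have hm := (hasSubgaussianMGF_of_mem_Icc (μ := μ) (X := id) aemeasurable_id hae).mgf_le s
  have hmean : a * B + b * (-B) = g := by rw [ha, hb]; field_simp; ring
  simp only [mgf, hint, id, hmean] at hm
  have hn : (((‖B - -B‖₊ / 2) ^ 2 : NNReal) : ℝ) = B ^ 2 := by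
    simp only [NNReal.coe_pow, NNReal.coe_div, coe_nnnorm, Real.norm_eq_abs, NNReal.coe_ofNat]
    rw [abs_of_pos (by linarith)]; ring
  rw [hn] at hm
  have e1 : B + g = 2 * B * a := by rw [ha]; field_simp
  have e2 : B - g = 2 * B * b := by rw [hb]; field_simp
  have e3 : s * (-B - g) = -s * (B + g) := by ring
  have e4 : B ^ 2 * s ^ 2 / 2 = s ^ 2 * B ^ 2 / 2 := by ring
  rw [e3, e4] at hm
  calc _ = 2 * B * (a * Real.exp (s * (B - g)) + b * Real.exp (-s * (B + g))) := by
        rw [mul_add (2 * B), ← mul_assoc (2 * B) a, ← mul_assoc (2 * B) b, ← e1, ← e2]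
    _ ≤ _ := by gcongr

/-- η-mixability of the square loss on `[-B, B]` for `0 < η ≤ 1/(2B²)`,
witnessed by Vovk's substitution function: the forecast
`γ = (1/(4ηB)) ln ((∑ p i e^{-η(B - c i)²}) / (∑ p i e^{-η(B + c i)²}))`
satisfies `(y - γ)² ≤ -(1/η) ln ∑ p i e^{-η(y - c i)²}` for every `y ∈ [-B, B]`. -/
theorem statement_4
    (B η : ℝ) (hB : 0 < B) (hη : 0 < η) (hη' : η ≤ 1 / (2 * B ^ 2))
    (N : ℕ) (hN : 1 ≤ N) (p c : Fin N → ℝ)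
    (hpnonneg : ∀ i, 0 ≤ p i) (hpsum : ∑ i, p i = 1)
    (hc : ∀ i, c i ∈ Set.Icc (-B) B)
    (γ : ℝ)
    (hγ : γ = (1 / (4 * η * B)) *
      Real.log ((∑ i, p i * Real.exp (-η * (B - c i) ^ 2)) /
        (∑ i, p i * Real.exp (-η * (B + c i) ^ 2)))) :
    ∀ y ∈ Set.Icc (-B) B,
      (y - γ) ^ 2 ≤ -(1 / η) * Real.log (∑ i, p i * Real.exp (-η * (y - c i) ^ 2)) := by
  have hη2 : 2 * η * B ^ 2 ≤ 1 := by
    rw [le_div_iff₀ (by positivity)] at hη'; linarith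
  have hpos : ∀ f : Fin N → ℝ, 0 < ∑ i, p i * Real.exp (f i) := by
    intro f
    obtain ⟨j, hj⟩ : ∃ j, 0 < p j := by
      by_contra! h
      have : ∑ i, p i ≤ 0 := Finset.sum_nonpos fun i _ => h i
      linarith
    exact Finset.sum_pos' (fun i _ => mul_nonneg (hpnonneg i) (Real.exp_pos _).le)
      ⟨j, Finset.mem_univ j, mul_pos hj (Real.exp_pos _)⟩
  set U := ∑ i, p i * Real.exp (-η * (B - c i) ^ 2) with hU
  set V := ∑ i, p i * Real.exp (-η * (B + c i) ^ 2) with hV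
  have hU0 : 0 < U := hpos _
  have hV0 : 0 < V := hpos _
  have hlog : Real.log (U / V) = 4 * η * B * γ := by
    rw [hγ]; field_simp
  have hUV : U = V * Real.exp (4 * η * B * γ) := by
    rw [← hlog, Real.exp_log (by positivity)]; field_simp
  have hup : γ ≤ B := by
    have : U ≤ V * Real.exp (4 * η * B * B) := by
      rw [hU, hV, Finset.sum_mul]
      refine Finset.sum_le_sum fun i _ => ?_
      rw [mul_assoc, ← Real.exp_add]
      refine mul_le_mul_of_nonneg_left (Real.exp_le_exp.2 ?_) (hpnonneg i)
      have := mul_nonneg (mul_pos hη hB).le (sub_nonneg.2 (hc i).2)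
      nlinarith
    rw [hUV] at this
    have := Real.exp_le_exp.1 (le_of_mul_le_mul_left this hV0)
    exact le_of_mul_le_mul_left this (by positivity)
  have hlow : -B ≤ γ := by
    have : V * Real.exp (4 * η * B * (-B)) ≤ U := by
      rw [hU, hV, Finset.sum_mul]
      refine Finset.sum_le_sum fun i _ => ?_
      rw [mul_assoc, ← Real.exp_add]
      refine mul_le_mul_of_nonneg_left (Real.exp_le_exp.2 ?_) (hpnonneg i)
      have := mul_nonneg (mul_pos hη hB).le (sub_nonneg.2 (hc i).1)
      nlinarith
    rw [hUV] at this
    have := Real.exp_le_exp.1 (le_of_mul_le_mul_left this hV0)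
    exact le_of_mul_le_mul_left this (by positivity)
  -- normalised endpoint value
  set t := U * Real.exp (η * (B - γ) ^ 2) with ht
  have htV : t = V * Real.exp (η * (B + γ) ^ 2) := by
    rw [ht, hUV, mul_assoc, ← Real.exp_add]; congr 2; ring
  have htU' : t = ∑ i, p i * Real.exp (-η * (B - c i) ^ 2 + η * (B - γ) ^ 2) := by
    rw [ht, hU, Finset.sum_mul]
    exact Finset.sum_congr rfl fun i _ => by rw [mul_assoc, ← Real.exp_add]
  have htV' : t = ∑ i, p i * Real.exp (-η * (B + c i) ^ 2 + η * (B + γ) ^ 2) := by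
    rw [htV, hV, Finset.sum_mul]
    exact Finset.sum_congr rfl fun i _ => by rw [mul_assoc, ← Real.exp_add]
  have ht1 : t ≤ 1 := by
    have key : (B + γ) * t + (B - γ) * t ≤ 2 * B := by
      calc (B + γ) * t + (B - γ) * t
          = ∑ i, p i * ((B + γ) * Real.exp (-η * (B - c i) ^ 2 + η * (B - γ) ^ 2)
            + (B - γ) * Real.exp (-η * (B + c i) ^ 2 + η * (B + γ) ^ 2)) := by
            conv_lhs => rw [htU']
            conv_lhs => arg 2; rw [← htU', htV']
            rw [Finset.mul_sum, Finset.mul_sum, ← Finset.sum_add_distrib]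
            exact Finset.sum_congr rfl fun i _ => by ring
        _ ≤ ∑ i, p i * (2 * B) := by
            refine Finset.sum_le_sum fun i _ => mul_le_mul_of_nonneg_left ?_ (hpnonneg i)
            have h := two_point_hoeffding B γ (2 * η * (c i - γ)) hB hlow hup
            have hE := Real.exp_pos (-η * (c i - γ) ^ 2)
            have h3 := mul_le_mul_of_nonneg_right h hE.le
            rw [add_mul, mul_assoc, mul_assoc (B - γ), mul_assoc (2 * B), ← Real.exp_add,
              ← Real.exp_add, ← Real.exp_add] at h3
            have e1 : 2 * η * (c i - γ) * (B - γ) + -η * (c i - γ) ^ 2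
              = -η * (B - c i) ^ 2 + η * (B - γ) ^ 2 := by ring
            have e2 : -(2 * η * (c i - γ)) * (B + γ) + -η * (c i - γ) ^ 2
              = -η * (B + c i) ^ 2 + η * (B + γ) ^ 2 := by ring
            rw [e1, e2] at h3
            refine h3.trans ?_
            have : Real.exp ((2 * η * (c i - γ)) ^ 2 * B ^ 2 / 2 + -η * (c i - γ) ^ 2) ≤ 1 := by
              rw [Real.exp_le_one_iff]
              have := mul_nonneg (mul_nonneg hη.le (sq_nonneg (c i - γ))) (sub_nonneg.2 hη2)
              nlinarith
            nlinarith
        _ = 2 * B := by rw [← Finset.sum_mul, hpsum, one_mul]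
    nlinarith
  intro y hy
  set l := (B + y) / (2 * B) with hl
  have hl0 : 0 ≤ l := div_nonneg (by linarith [hy.1]) (by linarith)
  have hl1 : 0 ≤ 1 - l := by
    rw [hl, sub_nonneg, div_le_one (by linarith)]; linarith [hy.2]
  have hly : y = l * B - (1 - l) * B := by rw [hl]; field_simp; ring
  have hmain : (∑ i, p i * Real.exp (-η * (y - c i) ^ 2)) * Real.exp (η * (y - γ) ^ 2) ≤ 1 := by
    calc _ = ∑ i, p i * Real.exp (-η * (y - c i) ^ 2 + η * (y - γ) ^ 2) := by
          rw [Finset.sum_mul]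
          exact Finset.sum_congr rfl fun i _ => by rw [mul_assoc, ← Real.exp_add]
      _ ≤ ∑ i, (l * (p i * Real.exp (-η * (B - c i) ^ 2 + η * (B - γ) ^ 2))
            + (1 - l) * (p i * Real.exp (-η * (B + c i) ^ 2 + η * (B + γ) ^ 2))) := by
          refine Finset.sum_le_sum fun i _ => ?_
          have h := convexOn_exp.2 (Set.mem_univ (-η * (B - c i) ^ 2 + η * (B - γ) ^ 2))
            (Set.mem_univ (-η * (B + c i) ^ 2 + η * (B + γ) ^ 2)) hl0 hl1 (by ring)
          simp only [smul_eq_mul] at h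
          have e : l * (-η * (B - c i) ^ 2 + η * (B - γ) ^ 2)
            + (1 - l) * (-η * (B + c i) ^ 2 + η * (B + γ) ^ 2)
            = -η * (y - c i) ^ 2 + η * (y - γ) ^ 2 := by
            clear_value l
            subst hly; ring
          rw [e] at h
          have := mul_le_mul_of_nonneg_left h (hpnonneg i)
          linarith
      _ = l * t + (1 - l) * t := by
          rw [Finset.sum_add_distrib, ← Finset.mul_sum, ← Finset.mul_sum, ← htU', ← htV']
      _ ≤ 1 := by linarith
  have hF0 := hpos fun i => -η * (y - c i) ^ 2
  have hfin := Real.log_nonpos (mul_pos hF0 (Real.exp_pos _)).le hmain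
  rw [Real.log_mul hF0.ne' (Real.exp_pos _).ne', Real.log_exp] at hfin
  have : (y - γ) ^ 2 ≤ (-Real.log (∑ i, p i * Real.exp (-η * (y - c i) ^ 2))) / η := by
    rw [le_div_iff₀ hη]; linarith
  calc _ ≤ _ := this
    _ = _ := by ring
end
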